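/- arXiv:2312.12171 — 3 statements merged into one kernel-verified Lean document; each statement's English description precedes it below -/
import Mathlib

section
/- Let e : E → E be a C¹ vector field, let x, X ∈ E and t ≥ 0. Define the derivative of the pushforward (∇_X f_*^t) e := D_y[y ↦ D(f t)(y) (e y)](x) X − D(f t)(x) (De(x) X). Then (∇_X f_*^t) e = ∫_0^t D(f (t−τ))(f τ x) ( D²F(f τ x) [ D(f τ)(x) X , D(f τ)(x) (e x) ] ) dτ. -/
open Set Filter Topology

/-- first order expansion of a flow in forward time, uniformly near a point -/
theorem flow_est {E : Type*} [NormedAddCommGroup E] [NormedSpace ℝ E]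
    (F : E → E) (hF : ContDiff ℝ 1 F) (f : ℝ → E → E)
    (hf0 : ∀ x : E, f 0 x = x)
    (hflow : ∀ t : ℝ, ∀ x : E, HasDerivAt (fun τ : ℝ => f τ x) (F (f t x)) t)
    (z : E) (c : ℝ) (hc : 0 < c) :
    ∃ δ > 0, ∀ h ∈ Icc (0:ℝ) δ, ∀ᶠ y in 𝓝 z,
      ‖(f h y - f h z) - (y - z) - h • fderiv ℝ F z (y - z)‖ ≤ c * h * ‖y - z‖ := by
  have hs : HasStrictFDerivAt F (fderiv ℝ F z) z :=
    (hF.contDiffAt).hasStrictFDerivAt (by norm_num)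
  set D := fderiv ℝ F z with hD
  have hs' := hs.isLittleO.def (show (0:ℝ) < c / 4 by positivity)
  rw [nhds_prod_eq] at hs'
  obtain ⟨V, hV, hVs⟩ := Filter.mem_prod_same_iff.1 hs'
  obtain ⟨R, hR, hRV⟩ := Metric.nhds_basis_closedBall.mem_iff.1 hV
  have key : ∀ p ∈ Metric.closedBall z R, ∀ q ∈ Metric.closedBall z R,
      ‖F p - F q - D (p - q)‖ ≤ c / 4 * ‖p - q‖ := fun p hp q hq =>
    hVs (Set.mk_mem_prod (hRV hp) (hRV hq))
  set K := ‖D‖ with hK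
  have hK0 : 0 ≤ K := norm_nonneg _
  set K' := K + c / 4 with hK'
  have hK'0 : 0 < K' := by positivity
  have key2 : ∀ p ∈ Metric.closedBall z R, ∀ q ∈ Metric.closedBall z R,
      ‖F p - F q‖ ≤ K' * ‖p - q‖ := by
    intro p hp q hq
    have h1 := key p hp q hq
    have h2 := D.le_opNorm (p - q)
    have h3 : ‖F p - F q‖ ≤ ‖F p - F q - D (p - q)‖ + ‖D (p - q)‖ := by
      simpa using norm_add_le (F p - F q - D (p - q)) (D (p - q))
    rw [hK']; nlinarith
  set M := ‖F z‖ + K' * R + 1 with hM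
  have hM0 : 0 < M := by positivity
  have zmem : z ∈ Metric.closedBall z R := Metric.mem_closedBall_self hR.le
  have bd : ∀ p ∈ Metric.closedBall z R, ‖F p‖ < M := by
    intro p hp
    have h1 := key2 p hp z zmem
    have h3 : ‖F p‖ ≤ ‖F p - F z‖ + ‖F z‖ := by simpa using norm_add_le (F p - F z) (F z)
    have h4 : ‖p - z‖ ≤ R := by simpa [dist_eq_norm] using hp
    have : K' * ‖p - z‖ ≤ K' * R := by gcongr
    rw [hM]; linarith
  -- choice of the time step
  obtain ⟨δ, hδ0, hδ1, hδ2, hδ3⟩ : ∃ δ > 0, M * δ ≤ R / 2 ∧ Real.exp (K' * δ) ≤ 2 ∧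
      2 * K * K' * δ ≤ c / 2 := by
    have e1 : ∀ᶠ δ in 𝓝 (0:ℝ), M * δ < R / 2 :=
      (show Continuous fun δ : ℝ => M * δ by fun_prop).continuousAt.eventually_lt_const
        (by simpa using hR)
    have e2 : ∀ᶠ δ in 𝓝 (0:ℝ), Real.exp (K' * δ) < 2 :=
      (show Continuous fun δ : ℝ => Real.exp (K' * δ) by fun_prop).continuousAt.eventually_lt_const
        (by simp)
    have e3 : ∀ᶠ δ in 𝓝 (0:ℝ), 2 * K * K' * δ < c / 2 :=
      (show Continuous fun δ : ℝ => 2 * K * K' * δ by fun_prop).continuousAt.eventually_lt_const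
        (by simpa using hc)
    have e := ((e1.and (e2.and e3)).filter_mono (nhdsWithin_le_nhds (s := Ioi 0))).and
      self_mem_nhdsWithin
    obtain ⟨δ, ⟨h1, h2, h3⟩, h4⟩ := e.exists
    exact ⟨δ, h4, h1.le, h2.le, h3.le⟩
  have trap : ∀ y ∈ Metric.ball z (R / 2), ∀ s ∈ Icc 0 δ, f s y ∈ Metric.closedBall z R := by
    intro y hy s hs
    have := image_norm_le_of_norm_deriv_right_lt_deriv_boundary (a := 0) (b := δ)
      (f := fun s => f s y - z) (f' := fun s => F (f s y))
      (B := fun s => R / 2 + M * s) (B' := fun _ => M)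
      (fun s _ => ((hflow s y).sub_const z).continuousAt.continuousWithinAt)
      (fun s _ => ((hflow s y).sub_const z).hasDerivWithinAt)
      (by simpa [hf0, dist_eq_norm] using (Metric.mem_ball.1 hy).le)
      (fun s => by simpa using ((hasDerivAt_id s).const_mul M).const_add (R / 2))
      (by
        intro s hs h
        apply bd
        rw [Metric.mem_closedBall, dist_eq_norm, h]
        have : M * s ≤ M * δ := by gcongr; exact hs.2.le
        linarith) hs
    rw [Metric.mem_closedBall, dist_eq_norm]
    have h2 : M * s ≤ M * δ := by gcongr; exact hs.2
    linarith
  refine ⟨δ, hδ0, fun h hh => ?_⟩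
  filter_upwards [Metric.ball_mem_nhds z (half_pos hR)] with y hy
  have zb : z ∈ Metric.ball z (R / 2) := Metric.mem_ball_self (half_pos hR)
  have hu : ∀ s, HasDerivAt (fun s => f s y - f s z) (F (f s y) - F (f s z)) s :=
    fun s => (hflow s y).sub (hflow s z)
  have u1 : ∀ s ∈ Icc 0 δ, ‖f s y - f s z‖ ≤ 2 * ‖y - z‖ := by
    intro s hs
    have := norm_le_gronwallBound_of_norm_deriv_right_le (a := 0) (b := δ)
      (f := fun s => f s y - f s z) (f' := fun s => F (f s y) - F (f s z))
      (δ := ‖y - z‖) (K := K') (ε := 0)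
      (fun s _ => (hu s).continuousAt.continuousWithinAt)
      (fun s _ => (hu s).hasDerivWithinAt) (by simp [hf0])
      (fun s hs => by
        simpa using key2 _ (trap y hy s ⟨hs.1, hs.2.le⟩) _ (trap z zb s ⟨hs.1, hs.2.le⟩)) s hs
    rw [gronwallBound_ε0] at this
    have h2 : Real.exp (K' * (s - 0)) ≤ 2 := le_trans (by
      gcongr; simpa using hs.2) hδ2
    nlinarith [norm_nonneg (y - z)]
  have u2 : ∀ s ∈ Icc 0 δ, ‖(f s y - f s z) - (y - z)‖ ≤ 2 * K' * δ * ‖y - z‖ := by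
    intro s hs
    have := norm_image_sub_le_of_norm_deriv_right_le_segment (a := 0) (b := δ)
      (f := fun s => f s y - f s z) (f' := fun s => F (f s y) - F (f s z))
      (C := K' * (2 * ‖y - z‖))
      (fun s _ => (hu s).continuousAt.continuousWithinAt)
      (fun s _ => (hu s).hasDerivWithinAt)
      (fun s hs => (key2 _ (trap y hy s ⟨hs.1, hs.2.le⟩) _ (trap z zb s ⟨hs.1, hs.2.le⟩)).trans
        (by gcongr; exact u1 s ⟨hs.1, hs.2.le⟩)) s hs
    simp only [hf0, sub_zero] at this
    calc _ ≤ _ := this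
      _ ≤ K' * (2 * ‖y - z‖) * δ := by gcongr; exact hs.2
      _ = _ := by ring
  have hw : ∀ s, HasDerivAt (fun s : ℝ => (f s y - f s z) - s • D (y - z))
      ((F (f s y) - F (f s z)) - D (y - z)) s := fun s => by
    simpa using! (hu s).sub ((hasDerivAt_id s).smul_const (D (y - z)))
  have := norm_image_sub_le_of_norm_deriv_right_le_segment (a := 0) (b := δ)
      (C := c * ‖y - z‖)
      (fun s _ => (hw s).continuousAt.continuousWithinAt)
      (fun s _ => (hw s).hasDerivWithinAt)
      (fun s hs => by
        have hs' : s ∈ Icc 0 δ := ⟨hs.1, hs.2.le⟩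
        have k := key _ (trap y hy s hs') _ (trap z zb s hs')
        have k1 := u1 s hs'
        have k2 := u2 s hs'
        have k3 := D.le_opNorm ((f s y - f s z) - (y - z))
        have k4 : ‖(F (f s y) - F (f s z)) - D (y - z)‖ ≤
            ‖F (f s y) - F (f s z) - D (f s y - f s z)‖ + ‖D ((f s y - f s z) - (y - z))‖ := by
          refine le_trans (le_of_eq ?_) (norm_add_le _ _)
          congr 1
          rw [map_sub D (f s y - f s z)]
          abel
        have k5 : K * ‖(f s y - f s z) - (y - z)‖ ≤ K * (2 * K' * δ * ‖y - z‖) := by gcongr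
        have k6 : 2 * K * K' * δ * ‖y - z‖ ≤ c / 2 * ‖y - z‖ := by gcongr
        have k7 : c / 4 * ‖f s y - f s z‖ ≤ c / 4 * (2 * ‖y - z‖) := by gcongr
        nlinarith) h hh
  simp only [hf0, sub_zero, zero_smul] at this
  calc _ = ‖f h y - f h z - h • D (y - z) - (y - z)‖ := by congr 1; abel
    _ ≤ _ := this
    _ = _ := by ring

theorem flow_var0 {E : Type*} [NormedAddCommGroup E] [NormedSpace ℝ E]
    (F : E → E) (hF : ContDiff ℝ 1 F) (f : ℝ → E → E)
    (hf0 : ∀ x : E, f 0 x = x)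
    (hflow : ∀ t : ℝ, ∀ x : E, HasDerivAt (fun τ : ℝ => f τ x) (F (f t x)) t)
    (hfd : ∀ t, Differentiable ℝ (f t)) (z : E) :
    HasDerivAt (fun h => fderiv ℝ (f h) z) (fderiv ℝ F z) 0 := by
  have h0 : fderiv ℝ (f 0) z = ContinuousLinearMap.id ℝ E := by
    have : f 0 = id := funext hf0
    rw [this, fderiv_id]
  rw [hasDerivAt_iff_isLittleO_nhds_zero, Asymptotics.isLittleO_iff]
  intro c hc
  obtain ⟨δ, hδ, H⟩ := flow_est F hF f hf0 hflow z c hc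
  obtain ⟨δ', hδ', H'⟩ := flow_est (fun x => - F x) hF.neg (fun t => f (-t))
    (by simpa using hf0) (fun t x => by
      simpa [Function.comp_def] using (hflow (-t) x).scomp t (hasDerivAt_neg t)) z c hc
  filter_upwards [Ioo_mem_nhds (neg_lt_zero.2 hδ') hδ] with h hh
  rw [zero_add, h0]
  have hd : HasFDerivAt (fun y => f h y - y - h • fderiv ℝ F z y)
      (fderiv ℝ (f h) z - ContinuousLinearMap.id ℝ E - h • fderiv ℝ F z) z :=
    (((hfd h z).hasFDerivAt).sub (hasFDerivAt_id z)).sub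
      ((fderiv ℝ F z).hasFDerivAt.const_smul h)
  refine hd.le_of_lip' (by positivity) ?_
  rcases le_total 0 h with h1 | h1
  · filter_upwards [H h ⟨h1, hh.2.le⟩] with y hy
    rw [Real.norm_eq_abs, abs_of_nonneg h1]
    refine le_trans (le_of_eq ?_) hy
    congr 1
    rw [map_sub, smul_sub]; abel
  · filter_upwards [H' (-h) ⟨by linarith, by linarith [hh.1]⟩] with y hy
    rw [Real.norm_eq_abs, abs_of_nonpos h1]
    refine le_trans (le_of_eq ?_) hy
    congr 1
    simp only [neg_neg, fderiv_fun_neg, _root_.neg_apply, neg_smul, smul_neg]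
    rw [map_sub, smul_sub]; abel

theorem flow_cocycle {E : Type*} [NormedAddCommGroup E] [NormedSpace ℝ E]
    (f : ℝ → E → E)
    (hfadd : ∀ s t : ℝ, ∀ x : E, f (s + t) x = f s (f t x))
    (hfd : ∀ t, Differentiable ℝ (f t)) (s t : ℝ) (x : E) :
    fderiv ℝ (f (s + t)) x = (fderiv ℝ (f s) (f t x)).comp (fderiv ℝ (f t) x) := by
  have : f (s + t) = f s ∘ f t := funext (hfadd s t)
  rw [this, fderiv_comp x (hfd s _) (hfd t x)]

theorem flow_var {E : Type*} [NormedAddCommGroup E] [NormedSpace ℝ E]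
    (F : E → E) (hF : ContDiff ℝ 1 F) (f : ℝ → E → E)
    (hf0 : ∀ x : E, f 0 x = x)
    (hfadd : ∀ s t : ℝ, ∀ x : E, f (s + t) x = f s (f t x))
    (hflow : ∀ t : ℝ, ∀ x : E, HasDerivAt (fun τ : ℝ => f τ x) (F (f t x)) t)
    (hfd : ∀ t, Differentiable ℝ (f t)) (x : E) (t : ℝ) :
    HasDerivAt (fun s => fderiv ℝ (f s) x) ((fderiv ℝ F (f t x)).comp (fderiv ℝ (f t) x)) t := by
  have h := flow_var0 F hF f hf0 hflow hfd (f t x)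
  rw [← sub_self t] at h
  have h2 := (h.comp_sub_const t t).clm_comp (hasDerivAt_const t (fderiv ℝ (f t) x))
  simp only [ContinuousLinearMap.comp_zero, add_zero] at h2
  convert h2 using 1
  funext s
  rw [← flow_cocycle f hfadd hfd, sub_add_cancel]

theorem tangent_hasFDerivAt {E : Type*} [NormedAddCommGroup E] [NormedSpace ℝ E]
    (G : E → E) (hG : ContDiff ℝ 2 G) (x v : E) :
    HasFDerivAt (fun p : E × E => (G p.1, fderiv ℝ G p.1 p.2))
      (((fderiv ℝ G x).comp (ContinuousLinearMap.fst ℝ E E)).prod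
        ((fderiv ℝ G x).comp (ContinuousLinearMap.snd ℝ E E) +
          ((fderiv ℝ (fderiv ℝ G) x).comp (ContinuousLinearMap.fst ℝ E E)).flip v)) (x, v) := by
  have h1 : HasFDerivAt G (fderiv ℝ G x) ((x, v) : E × E).1 :=
    (hG.differentiable (by norm_num) x).hasFDerivAt
  have h2 : HasFDerivAt (fderiv ℝ G) (fderiv ℝ (fderiv ℝ G) x) ((x, v) : E × E).1 :=
    ((hG.fderiv_right (m := 1) (by norm_num)).differentiable (by norm_num) x).hasFDerivAt
  have h3 : HasFDerivAt (fun p : E × E => p.1) (ContinuousLinearMap.fst ℝ E E) (x, v) :=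
    hasFDerivAt_fst
  have h4 : HasFDerivAt (fun p : E × E => p.2) (ContinuousLinearMap.snd ℝ E E) (x, v) :=
    hasFDerivAt_snd
  exact (h1.comp _ h3).prodMk ((h2.comp _ h3).clm_apply h4)

theorem tangent_contDiff {E : Type*} [NormedAddCommGroup E] [NormedSpace ℝ E]
    (G : E → E) (hG : ContDiff ℝ 2 G) :
    ContDiff ℝ 1 (fun p : E × E => (G p.1, fderiv ℝ G p.1 p.2)) := by
  have h1 : ContDiff ℝ 1 G := hG.of_le (by norm_num)
  have h2 : ContDiff ℝ 1 (fderiv ℝ G) := hG.fderiv_right (m := 1) (by norm_num)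
  exact (h1.comp contDiff_fst).prodMk ((h2.comp contDiff_fst).clm_apply contDiff_snd)

theorem flow_var2 {E : Type*} [NormedAddCommGroup E] [NormedSpace ℝ E]
    (F : E → E) (hF : ContDiff ℝ 2 F) (f : ℝ → E → E)
    (hf0 : ∀ x : E, f 0 x = x)
    (hfadd : ∀ s t : ℝ, ∀ x : E, f (s + t) x = f s (f t x))
    (hflow : ∀ t : ℝ, ∀ x : E, HasDerivAt (fun τ : ℝ => f τ x) (F (f t x)) t)
    (hfC2 : ∀ t : ℝ, ContDiff ℝ 2 (f t)) (x X v : E) (t : ℝ) :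
    HasDerivAt (fun s => fderiv ℝ (fderiv ℝ (f s)) x X v)
      (fderiv ℝ F (f t x) (fderiv ℝ (fderiv ℝ (f t)) x X v) +
        fderiv ℝ (fderiv ℝ F) (f t x) (fderiv ℝ (f t) x X) (fderiv ℝ (f t) x v)) t := by
  have hfd : ∀ t, Differentiable ℝ (f t) := fun t => (hfC2 t).differentiable (by norm_num)
  have h := flow_var (fun p : E × E => (F p.1, fderiv ℝ F p.1 p.2)) (tangent_contDiff F hF)
    (fun s p => (f s p.1, fderiv ℝ (f s) p.1 p.2))
    (fun p => by
      have : f 0 = id := funext hf0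
      simp [this])
    (fun s t p => by
      simp [hfadd s t p.1, flow_cocycle f hfadd hfd])
    (fun t p => by
      refine (hflow t p.1).prodMk ?_
      simpa using (flow_var F (hF.of_le (by norm_num)) f hf0 hfadd hflow hfd p.1 t).clm_apply
        (hasDerivAt_const t p.2))
    (fun t => (tangent_contDiff (f t) (hfC2 t)).differentiable (by norm_num)) (x, v) t
  have h2 := ((ContinuousLinearMap.snd ℝ E E).hasFDerivAt.comp_hasDerivAt t
    (h.clm_apply (hasDerivAt_const t ((X, 0) : E × E))))
  have e : ∀ s, fderiv ℝ (fun p : E × E => (f s p.1, fderiv ℝ (f s) p.1 p.2)) (x, v) = _ :=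
    fun s => (tangent_hasFDerivAt (f s) (hfC2 s) x v).fderiv
  simp only [e, (tangent_hasFDerivAt F hF _ _).fderiv] at h2
  simpa [Function.comp_def] using h2

/-- expression of ∇ f_* by ∇²F, Lemma `l:vari`.
Let `F` be a C² vector field on a finite-dimensional real normed space `E`,
generating a global flow `f`.  Let `e` be a C¹ vector field, `x X : E`, `t ≥ 0`.
Then the "Hessian of the flow map" term
`(∇_X f_*^t) e = D_y[y ↦ D(f t)(y)(e y)](x) X − D(f t)(x)(De(x) X)`
equals `∫_0^t D(f (t−τ))(f τ x) (D²F(f τ x)[D(f τ)(x) X, D(f τ)(x)(e x)]) dτ`. -/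
theorem equivariant_divergence_stmt0
    {E : Type*} [NormedAddCommGroup E] [NormedSpace ℝ E] [FiniteDimensional ℝ E]
    (F : E → E) (hF : ContDiff ℝ 2 F)
    (f : ℝ → E → E)
    (hf0 : ∀ x : E, f 0 x = x)
    (hfadd : ∀ s t : ℝ, ∀ x : E, f (s + t) x = f s (f t x))
    (hflow : ∀ t : ℝ, ∀ x : E, HasDerivAt (fun τ : ℝ => f τ x) (F (f t x)) t)
    (hfC2 : ∀ t : ℝ, ContDiff ℝ 2 (f t))
    (e : E → E) (he : ContDiff ℝ 1 e)
    (x X : E) (t : ℝ) (ht : 0 ≤ t) :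
    fderiv ℝ (fun y => fderiv ℝ (f t) y (e y)) x X
      - fderiv ℝ (f t) x (fderiv ℝ e x X)
    = ∫ τ in (0:ℝ)..t,
        fderiv ℝ (f (t - τ)) (f τ x)
          (fderiv ℝ (fderiv ℝ F) (f τ x) (fderiv ℝ (f τ) x X)
            (fderiv ℝ (f τ) x (e x))) := by
  have hfd : ∀ t, Differentiable ℝ (f t) := fun t => (hfC2 t).differentiable (by norm_num)
  have hA := flow_var F (hF.of_le (by norm_num)) f hf0 hfadd hflow hfd x
  have hB := flow_var2 F hF f hf0 hfadd hflow hfC2 x X (e x)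
  have id0 : ∀ y, fderiv ℝ (f 0) y = ContinuousLinearMap.id ℝ E := fun y => by
    have : f 0 = id := funext hf0
    rw [this, fderiv_id]
  have lhs : fderiv ℝ (fun y => fderiv ℝ (f t) y (e y)) x X
      - fderiv ℝ (f t) x (fderiv ℝ e x X) = fderiv ℝ (fderiv ℝ (f t)) x X (e x) := by
    have h1 : HasFDerivAt (fderiv ℝ (f t)) (fderiv ℝ (fderiv ℝ (f t)) x) x :=
      (((hfC2 t).fderiv_right (m := 1) (by norm_num)).differentiable (by norm_num) x).hasFDerivAt
    have h2 : HasFDerivAt e (fderiv ℝ e x) x := (he.differentiable (by norm_num) x).hasFDerivAt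
    rw [(h1.clm_apply h2).fderiv]
    simp
  rw [lhs]
  -- the inverse of the derivative cocycle
  have inv1 : ∀ τ, fderiv ℝ (f (-τ)) (f τ x) * fderiv ℝ (f τ) x = 1 := fun τ => by
    have := flow_cocycle f hfadd hfd (-τ) τ x
    rw [neg_add_cancel, id0] at this
    exact this.symm
  have inv2 : ∀ τ, fderiv ℝ (f τ) x * fderiv ℝ (f (-τ)) (f τ x) = 1 := fun τ => by
    have := flow_cocycle f hfadd hfd τ (-τ) (f τ x)
    rw [add_neg_cancel, id0, ← hfadd, neg_add_cancel, hf0] at this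
    exact this.symm
  have hJ : ∀ τ, HasDerivAt (fun s => fderiv ℝ (f (-s)) (f s x))
      (-(fderiv ℝ (f (-τ)) (f τ x) * fderiv ℝ F (f τ x))) τ := by
    intro τ
    let U : ℝ → (E →L[ℝ] E)ˣ := fun s =>
      ⟨fderiv ℝ (f s) x, fderiv ℝ (f (-s)) (f s x), inv2 s, inv1 s⟩
    have h := (hasFDerivAt_ringInverse (𝕜 := ℝ) (U τ)).comp_hasDerivAt τ (hA τ)
    have e1 : (Ring.inverse ∘ fun s => fderiv ℝ (f s) x) =
        fun s => fderiv ℝ (f (-s)) (f s x) := by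
      funext s
      exact Ring.inverse_unit (U s)
    rw [e1] at h
    refine h.congr_deriv ?_
    change -(fderiv ℝ (f (-τ)) (f τ x) * (fderiv ℝ F (f τ x) * fderiv ℝ (f τ) x) *
      fderiv ℝ (f (-τ)) (f τ x)) = _
    rw [mul_assoc, mul_assoc, inv2, mul_one]
  have hC : ∀ τ, fderiv ℝ (f (t - τ)) (f τ x) =
      (fderiv ℝ (f t) x).comp (fderiv ℝ (f (-τ)) (f τ x)) := fun τ => by
    have := flow_cocycle f hfadd hfd t (-τ) (f τ x)
    rwa [← hfadd (-τ), neg_add_cancel, hf0, ← sub_eq_add_neg] at this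
  have main : ∀ τ, HasDerivAt (fun s => fderiv ℝ (f (t - s)) (f s x)
        (fderiv ℝ (fderiv ℝ (f s)) x X (e x)))
      (fderiv ℝ (f (t - τ)) (f τ x)
          (fderiv ℝ (fderiv ℝ F) (f τ x) (fderiv ℝ (f τ) x X)
            (fderiv ℝ (f τ) x (e x)))) τ := by
    intro τ
    simp only [hC]
    have h := (fderiv ℝ (f t) x).hasFDerivAt.comp_hasDerivAt τ ((hJ τ).clm_apply (hB τ))
    simpa [Function.comp_def] using h
  have cA : Continuous fun s => fderiv ℝ (f s) x :=
    continuous_iff_continuousAt.2 fun s => (hA s).continuousAt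
  have cJ : Continuous fun s => fderiv ℝ (f (-s)) (f s x) :=
    continuous_iff_continuousAt.2 fun s => (hJ s).continuousAt
  have cf : Continuous fun s => f s x :=
    continuous_iff_continuousAt.2 fun s => (hflow s x).continuousAt
  have cD : Continuous (fderiv ℝ (fderiv ℝ F)) :=
    (hF.fderiv_right (m := 1) (by norm_num)).continuous_fderiv (by norm_num)
  have cD' : Continuous fun s => fderiv ℝ (fderiv ℝ F) (f s x) := cD.comp cf
  rw [intervalIntegral.integral_eq_sub_of_hasDerivAt (fun τ _ => main τ)]
  · have z0 : fderiv ℝ (fderiv ℝ (f 0)) x = 0 := by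
      have : fderiv ℝ (f 0) = fun _ => ContinuousLinearMap.id ℝ E := funext id0
      rw [this]; simp
    simp [id0, z0]
  · apply Continuous.intervalIntegrable
    simp only [hC]
    fun_prop
end

section
/- Fix x, X, e ∈ E and define v : ℝ → E by v(s) := D²(f s)(x)[X, e]. Then v(0) = 0 and, for all s ≥ 0, v is differentiable with v'(s) = DF(f s x)(v(s)) + D²F(f s x)[ D(f s)(x) X , D(f s)(x) e ]. -/
open Set Filter Topology in
theorem flow_bound_pos {E : Type*} [NormedAddCommGroup E] [NormedSpace ℝ E] [FiniteDimensional ℝ E]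
    (F : E → E) (hF : ContDiff ℝ 1 F) (f : ℝ → E → E) (hf0 : ∀ x : E, f 0 x = x)
    (hflow : ∀ t : ℝ, ∀ x : E, HasDerivAt (fun τ : ℝ => f τ x) (F (f t x)) t)
    (x : E) (T : ℝ) (hT : 0 ≤ T) :
    ∃ C : ℝ, 0 ≤ C ∧ ∃ δ : ℝ, 0 < δ ∧ ∀ y, ‖y - x‖ < δ → ∀ s ∈ Icc 0 T,
      ‖F (f s y) - F (f s x)‖ ≤ C * ‖y - x‖ := by
  have hcont : ∀ y, Continuous (fun s => f s y) := fun y =>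
    continuous_iff_continuousAt.2 fun t => (hflow t y).continuousAt
  obtain ⟨R, hR⟩ := (isCompact_Icc (a := (0:ℝ)) (b := T)).exists_bound_of_continuousOn
    (hcont x).continuousOn
  obtain ⟨L₀, hL₀⟩ := (isCompact_closedBall (0:E) (R+1)).exists_bound_of_continuousOn
    (hF.continuous_fderiv one_ne_zero).continuousOn
  set L := max L₀ 0 with hLdef
  have hL : 0 ≤ L := le_max_right _ _
  have hlip : ∀ a ∈ Metric.closedBall (0:E) (R+1), ∀ b ∈ Metric.closedBall (0:E) (R+1),
      ‖F b - F a‖ ≤ L * ‖b - a‖ := by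
    intro a ha b hb
    exact (convex_closedBall (0:E) (R+1)).norm_image_sub_le_of_norm_fderiv_le (𝕜 := ℝ)
      (fun z _ => (hF.differentiable one_ne_zero) z)
      (fun z hz => (hL₀ z hz).trans (le_max_left _ _)) ha hb
  have hx : ∀ s ∈ Icc 0 T, f s x ∈ Metric.closedBall (0:E) (R+1) := by
    intro s hs
    rw [mem_closedBall_zero_iff]
    linarith [hR s hs]
  have hy : ∀ s ∈ Icc 0 T, ∀ y, ‖f s y - f s x‖ ≤ 1 → f s y ∈ Metric.closedBall (0:E) (R+1) := by
    intro s hs y h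
    rw [mem_closedBall_zero_iff]
    have := norm_add_le (f s y - f s x) (f s x)
    rw [sub_add_cancel] at this
    linarith [hR s hs]
  set M := Real.exp ((L+1) * T) with hM
  have hMpos : 0 < M := Real.exp_pos _
  refine ⟨L * M, by positivity, M⁻¹, by positivity, ?_⟩
  intro y hyx
  rcases eq_or_ne y x with rfl | hne
  · intro s _; simp
  have hpos : 0 < ‖y - x‖ := norm_pos_iff.2 (sub_ne_zero.2 hne)
  have hexp : ∀ s ∈ Icc 0 T, ‖y - x‖ * Real.exp ((L+1) * s) ≤ ‖y - x‖ * M := by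
    intro s hs
    have : (L+1) * s ≤ (L+1) * T := mul_le_mul_of_nonneg_left hs.2 (by linarith)
    exact mul_le_mul_of_nonneg_left (Real.exp_le_exp.2 this) hpos.le
  have hM1 : ‖y - x‖ * M ≤ 1 := by
    have := mul_le_mul_of_nonneg_right hyx.le hMpos.le
    rwa [inv_mul_cancel₀ hMpos.ne'] at this
  have key : ∀ ⦃s⦄, s ∈ Icc 0 T → ‖f s y - f s x‖ ≤ ‖y - x‖ * Real.exp ((L+1) * s) := by
    refine image_norm_le_of_norm_deriv_right_lt_deriv_boundary'
      (f' := fun s => F (f s y) - F (f s x))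
      (B' := fun s => ‖y - x‖ * (Real.exp ((L+1) * s) * (L+1)))
      ((hcont y).sub (hcont x)).continuousOn
      (fun s _ => ((hflow s y).sub (hflow s x)).hasDerivWithinAt) ?_ ?_ ?_ ?_
    · simp [hf0]
    · fun_prop
    · intro s _
      have h1 : HasDerivAt (fun s : ℝ => (L+1) * s) (L+1) s := by
        simpa using (hasDerivAt_id s).const_mul (L+1)
      exact (h1.exp.const_mul _).hasDerivWithinAt
    · intro s hs heq
      replace heq : ‖f s y - f s x‖ = ‖y - x‖ * Real.exp ((L+1) * s) := heq
      have hs' : s ∈ Icc 0 T := ⟨hs.1, hs.2.le⟩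
      have h1 := hlip _ (hx s hs') _ (hy s hs' y (heq.le.trans ((hexp s hs').trans hM1)))
      rw [heq] at h1
      have : 0 < ‖y - x‖ * Real.exp ((L+1) * s) := by positivity
      refine lt_of_le_of_lt h1 ?_
      nlinarith
  intro s hs
  have h1 := (key hs).trans (hexp s hs)
  have h2 := hlip _ (hx s hs) _ (hy s hs y (h1.trans hM1))
  calc _ ≤ _ := h2
    _ ≤ L * (‖y - x‖ * M) := mul_le_mul_of_nonneg_left h1 hL
    _ = _ := by ring

open Set Filter Topology in
theorem flow_bound {E : Type*} [NormedAddCommGroup E] [NormedSpace ℝ E] [FiniteDimensional ℝ E]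
    (F : E → E) (hF : ContDiff ℝ 1 F) (f : ℝ → E → E) (hf0 : ∀ x : E, f 0 x = x)
    (hflow : ∀ t : ℝ, ∀ x : E, HasDerivAt (fun τ : ℝ => f τ x) (F (f t x)) t)
    (x : E) (T : ℝ) (hT : 0 ≤ T) :
    ∃ C : ℝ, 0 ≤ C ∧ ∃ δ : ℝ, 0 < δ ∧ ∀ y, ‖y - x‖ < δ → ∀ s ∈ Icc (-T) T,
      ‖F (f s y) - F (f s x)‖ ≤ C * ‖y - x‖ := by
  obtain ⟨C, hC, δ, hδ, h⟩ := flow_bound_pos F hF f hf0 hflow x T hT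
  obtain ⟨C', hC', δ', hδ', h'⟩ := flow_bound_pos (fun z => - F z) hF.neg (fun s => f (-s))
    (by simpa using hf0) (by
      intro t z
      have := (hflow (-t) z).scomp t (hasDerivAt_neg t)
      simpa [Function.comp_def] using this) x T hT
  refine ⟨max C C', le_max_of_le_left hC, min δ δ', lt_min hδ hδ', ?_⟩
  intro y hy s hs
  rcases le_total 0 s with h0 | h0
  · exact (h y (hy.trans_le (min_le_left _ _)) s ⟨h0, hs.2⟩).trans
      (mul_le_mul_of_nonneg_right (le_max_left _ _) (norm_nonneg _))
  · have := h' y (hy.trans_le (min_le_right _ _)) (-s) ⟨by linarith, by linarith [hs.1]⟩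
    simp only [neg_neg] at this
    rw [← neg_sub', norm_neg] at this
    exact this.trans (mul_le_mul_of_nonneg_right (le_max_right _ _) (norm_nonneg _))

open Set Filter Topology in
theorem flow_variation {E : Type*} [NormedAddCommGroup E] [NormedSpace ℝ E] [FiniteDimensional ℝ E]
    (F : E → E) (hF : ContDiff ℝ 1 F) (f : ℝ → E → E) (hf0 : ∀ x : E, f 0 x = x)
    (hflow : ∀ t : ℝ, ∀ x : E, HasDerivAt (fun τ : ℝ => f τ x) (F (f t x)) t)
    (hfd : ∀ t : ℝ, Differentiable ℝ (f t)) (x e : E) (s₀ : ℝ) :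
    HasDerivAt (fun s => fderiv ℝ (f s) x e) (fderiv ℝ F (f s₀ x) (fderiv ℝ (f s₀) x e)) s₀ := by
  have hcont : ∀ y, Continuous (fun s => f s y) := fun y =>
    continuous_iff_continuousAt.2 fun t => (hflow t y).continuousAt
  set T := |s₀| + 1 with hTdef
  have hT : 0 ≤ T := by positivity
  obtain ⟨C, hC, δ, hδ, hb⟩ := flow_bound F hF f hf0 hflow x T hT
  set w : ℝ → E := fun s => fderiv ℝ (f s) x e with hw
  set g : ℝ → E := fun s => fderiv ℝ F (f s x) (w s) with hg
  set q : ℝ → ℝ → E := fun h s => h⁻¹ • (f s (x + h • e) - f s x) with hq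
  set q' : ℝ → ℝ → E := fun h s => h⁻¹ • (F (f s (x + h • e)) - F (f s x)) with hq'
  have hline : HasDerivAt (fun h : ℝ => x + h • e) e 0 := by
    simpa using ((hasDerivAt_id (0:ℝ)).smul_const e).const_add x
  have hd : ∀ s, HasDerivAt (fun h : ℝ => f s (x + h • e)) (w s) 0 := by
    intro s
    have h1 : HasFDerivAt (f s) (fderiv ℝ (f s) x) (x + (0:ℝ) • e) := by
      simpa using (hfd s x).hasFDerivAt
    exact h1.comp_hasDerivAt (0:ℝ) hline
  have hqlim : ∀ s, Tendsto (fun h => q h s) (𝓝[≠] 0) (𝓝 (w s)) := by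
    intro s
    simpa using hasDerivAt_iff_tendsto_slope_zero.1 (hd s)
  have hq'lim : ∀ s, Tendsto (fun h => q' h s) (𝓝[≠] 0) (𝓝 (g s)) := by
    intro s
    have h1 : HasFDerivAt F (fderiv ℝ F (f s x)) (f s (x + (0:ℝ) • e)) := by
      simpa using (hF.differentiable one_ne_zero (f s x)).hasFDerivAt
    simpa using hasDerivAt_iff_tendsto_slope_zero.1 (h1.comp_hasDerivAt (0:ℝ) (hd s))
  have hqd : ∀ h s, HasDerivAt (q h) (q' h s) s := fun h s =>
    ((hflow s (x + h • e)).sub (hflow s x)).const_smul h⁻¹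
  have hq'c : ∀ h, Continuous (q' h) := by
    intro h
    exact ((hF.continuous.comp (hcont _)).sub (hF.continuous.comp (hcont _))).const_smul _
  have hbound : ∀ᶠ h in 𝓝[≠] (0:ℝ), ∀ s ∈ Icc (-T) T, ‖q' h s‖ ≤ C * ‖e‖ := by
    have h1 : Tendsto (fun h : ℝ => ‖(x + h • e) - x‖) (𝓝 0) (𝓝 0) := by
      have : Continuous (fun h : ℝ => ‖(x + h • e) - x‖) := by fun_prop
      simpa using this.tendsto 0
    filter_upwards [(h1.eventually (gt_mem_nhds hδ)).filter_mono nhdsWithin_le_nhds,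
      self_mem_nhdsWithin] with h hh hne s hs
    have h2 := hb _ hh s hs
    have hne' : 0 < ‖h‖ := norm_pos_iff.2 hne
    rw [add_sub_cancel_left, norm_smul] at h2
    simp only [hq', norm_smul, norm_inv]
    rw [inv_mul_le_iff₀ hne']
    linarith
  have hwlip : ∀ s ∈ Icc (-T) T, ∀ t ∈ Icc (-T) T, ‖w t - w s‖ ≤ C * ‖e‖ * ‖t - s‖ := by
    intro s hs t ht
    refine le_of_tendsto ((hqlim t).sub (hqlim s)).norm ?_
    filter_upwards [hbound] with h hh
    exact (convex_Icc (-T) T).norm_image_sub_le_of_norm_hasDerivWithin_le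
      (fun z _ => (hqd h z).hasDerivWithinAt) hh hs ht
  have hwc : ContinuousOn w (Icc (-T) T) := by
    refine (LipschitzOnWith.of_dist_le_mul (K := ⟨C * ‖e‖, by positivity⟩) ?_).continuousOn
    intro s hs t ht
    rw [dist_eq_norm, dist_eq_norm]
    exact hwlip t ht s hs
  have hgc : ContinuousOn g (Icc (-T) T) :=
    (((hF.continuous_fderiv one_ne_zero).comp (hcont x)).continuousOn).clm_apply hwc
  have hs₀ : s₀ ∈ Ioo (-T) T := by
    exact abs_lt.1 (by linarith)
  have hint : ∀ s ∈ Ioo (-T) T, w s = w s₀ + ∫ t in s₀..s, g t := by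
    intro s hs
    have hsub : uIoc s₀ s ⊆ Icc (-T) T :=
      uIoc_subset_uIcc.trans (uIcc_subset_Icc (Ioo_subset_Icc_self hs₀) (Ioo_subset_Icc_self hs))
    have h1 : Tendsto (fun h => ∫ t in s₀..s, q' h t) (𝓝[≠] 0) (𝓝 (∫ t in s₀..s, g t)) := by
      refine intervalIntegral.tendsto_integral_filter_of_dominated_convergence
        (fun _ => C * ‖e‖) ?_ ?_ ?_ ?_
      · exact Eventually.of_forall fun h => (hq'c h).aestronglyMeasurable
      · filter_upwards [hbound] with h hh
        exact MeasureTheory.ae_of_all _ fun t ht => hh t (hsub ht)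
      · exact intervalIntegrable_const
      · exact MeasureTheory.ae_of_all _ fun t _ => hq'lim t
    have h2 := (hqlim s).sub (hqlim s₀)
    have h3 : (fun h => ∫ t in s₀..s, q' h t) = fun h => q h s - q h s₀ := by
      funext h
      exact intervalIntegral.integral_eq_sub_of_hasDerivAt (fun t _ => hqd h t)
        ((hq'c h).intervalIntegrable _ _)
    rw [h3] at h1
    rw [tendsto_nhds_unique h1 h2]
    abel
  have hgo : ContinuousOn g (Ioo (-T) T) := hgc.mono Ioo_subset_Icc_self
  have hnh : Ioo (-T) T ∈ 𝓝 s₀ := isOpen_Ioo.mem_nhds hs₀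
  have hfin : HasDerivAt (fun s => w s₀ + ∫ t in s₀..s, g t) (g s₀) s₀ :=
    (intervalIntegral.integral_hasDerivAt_right (by simp)
      (hgo.stronglyMeasurableAtFilter isOpen_Ioo s₀ hs₀) (hgo.continuousAt hnh)).const_add _
  refine hfin.congr_of_eventuallyEq ?_
  filter_upwards [hnh] with s hs
  exact hint s hs

theorem hasFDerivAt_ext {E : Type*} [NormedAddCommGroup E] [NormedSpace ℝ E]
    (G : E → E) (hG : ContDiff ℝ 2 G) (p u a b : E) :
    fderiv ℝ (fun z : E × E => (G z.1, fderiv ℝ G z.1 z.2)) (p, u) (a, b)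
      = (fderiv ℝ G p a, fderiv ℝ G p b + fderiv ℝ (fderiv ℝ G) p a u) := by
  have h1 : HasFDerivAt (fun z : E × E => G z.1)
      ((fderiv ℝ G p).comp (ContinuousLinearMap.fst ℝ E E)) (p, u) :=
    HasFDerivAt.comp (p, u) (g := G) ((hG.differentiable two_ne_zero) p).hasFDerivAt hasFDerivAt_fst
  have hG' : ContDiff ℝ 1 (fderiv ℝ G) := hG.fderiv_right (by norm_num)
  have h2 : HasFDerivAt (fun z : E × E => fderiv ℝ G z.1)
      ((fderiv ℝ (fderiv ℝ G) p).comp (ContinuousLinearMap.fst ℝ E E)) (p, u) :=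
    HasFDerivAt.comp (p, u) (g := fderiv ℝ G)
      ((hG'.differentiable one_ne_zero) p).hasFDerivAt hasFDerivAt_fst
  have h3 := h1.prodMk (h2.clm_apply (hasFDerivAt_snd (𝕜 := ℝ) (E := E) (F := E) (p := (p, u))))
  rw [h3.fderiv]
  simp

/-- Fix `x X e : E` and define `v s := D²(f s)(x)[X, e]` (second Fréchet derivative
of the time-`s` flow map).  Then `v 0 = 0` and, for all `s ≥ 0`, `v` is
differentiable with `v'(s) = DF(f s x)(v s) + D²F(f s x)[D(f s)(x) X, D(f s)(x) e]`. -/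
theorem equivariant_divergence_stmt1
    {E : Type*} [NormedAddCommGroup E] [NormedSpace ℝ E] [FiniteDimensional ℝ E]
    (F : E → E) (hF : ContDiff ℝ 2 F)
    (f : ℝ → E → E)
    (hf0 : ∀ x : E, f 0 x = x)
    (hfadd : ∀ s t : ℝ, ∀ x : E, f (s + t) x = f s (f t x))
    (hflow : ∀ t : ℝ, ∀ x : E, HasDerivAt (fun τ : ℝ => f τ x) (F (f t x)) t)
    (hfC2 : ∀ t : ℝ, ContDiff ℝ 2 (f t))
    (x X e : E)
    (v : ℝ → E)
    (hv : ∀ s : ℝ, v s = fderiv ℝ (fun y => fderiv ℝ (f s) y) x X e) :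
    v 0 = 0 ∧
    ∀ s : ℝ, 0 ≤ s →
      HasDerivAt v
        (fderiv ℝ F (f s x) (v s)
          + fderiv ℝ (fderiv ℝ F) (f s x) (fderiv ℝ (f s) x X) (fderiv ℝ (f s) x e)) s := by
  have hext : ∀ G : E → E, ContDiff ℝ 2 G →
      ContDiff ℝ 1 (fun z : E × E => (G z.1, fderiv ℝ G z.1 z.2)) := by
    intro G hG
    have hG' : ContDiff ℝ 1 (fderiv ℝ G) := hG.fderiv_right (by norm_num)
    exact ((hG.of_le (by norm_num)).comp contDiff_fst).prodMk
      ((hG'.comp contDiff_fst).clm_apply contDiff_snd)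
  have hid : f 0 = id := funext hf0
  constructor
  · rw [hv, hid]
    have : (fun y : E => fderiv ℝ (id : E → E) y) = fun _ => ContinuousLinearMap.id ℝ E := by
      funext y
      exact fderiv_id
    rw [this]
    simp
  · intro s _
    have hvar := flow_variation F (hF.of_le (by norm_num)) f hf0 hflow
      (fun t => (hfC2 t).differentiable two_ne_zero)
    have key := flow_variation (fun z : E × E => (F z.1, fderiv ℝ F z.1 z.2)) (hext F hF)
      (fun t z => (f t z.1, fderiv ℝ (f t) z.1 z.2))
      (by rintro ⟨p, u⟩; simp [hid])
      (by
        rintro t ⟨p, u⟩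
        exact (hflow t p).prodMk (hvar p u t))
      (fun t => (hext (f t) (hfC2 t)).differentiable one_ne_zero) (x, e) (X, 0) s
    simp only [hasFDerivAt_ext _ hF] at key
    simp only [hasFDerivAt_ext _ (hfC2 _)] at key
    have h2 := (ContinuousLinearMap.snd ℝ E E).hasFDerivAt.comp_hasDerivAt s key
    have hv' : v = fun s => fderiv ℝ (fderiv ℝ (f s)) x X e := funext hv
    rw [hv']
    simpa [Function.comp_def] using h2
end

section
/- Fix x ∈ E and let b : ℝ → E be continuous. Define w : ℝ → E by w(t) := ∫_0^t D(f (t−s))(f s x) (b s) ds. Then w(0) = 0 and, for all t ≥ 0, w is differentiable with w'(t) = DF(f t x)(w(t)) + b(t). -/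
open Set Filter Topology

/-- One-sided first-order expansion of the space derivative of a flow at time zero. -/
lemma flow_fderiv_forward {E : Type*} [NormedAddCommGroup E] [NormedSpace ℝ E]
    (F : E → E) (f : ℝ → E → E) (y : E) (A : E →L[ℝ] E) (hF : HasStrictFDerivAt F A y)
    (hf0 : ∀ x : E, f 0 x = x)
    (hflow : ∀ t : ℝ, ∀ x : E, HasDerivAt (fun τ : ℝ => f τ x) (F (f t x)) t)
    (hfd : ∀ t : ℝ, DifferentiableAt ℝ (f t) y) (η : ℝ) (hη : 0 < η) :
    ∃ ε > 0, ∀ τ ∈ Icc (0:ℝ) ε,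
      ‖fderiv ℝ (f τ) y - ContinuousLinearMap.id ℝ E - τ • A‖ ≤ η * τ := by
  set K : ℝ := ‖A‖ + 1 with hK
  have hK0 : 0 < K := by positivity
  set L : ℝ := Real.exp K with hL
  have hL0 : 0 < L := Real.exp_pos _
  set c : ℝ := min 1 (η / (2 * L)) with hc
  have hc0 : 0 < c := by positivity
  have hc1 : c ≤ 1 := min_le_left _ _
  have hcL : c * L ≤ η / 2 := by
    have : c ≤ η / (2 * L) := min_le_right _ _
    calc c * L ≤ η / (2 * L) * L := by gcongr
      _ = η / 2 := by field_simp
  have hev := hF.isLittleO.def hc0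
  rw [Metric.eventually_nhds_iff] at hev
  obtain ⟨δ, hδ, hball⟩ := hev
  have hstr : ∀ p q : E, ‖p - y‖ < δ → ‖q - y‖ < δ →
      ‖F p - F q - A (p - q)‖ ≤ c * ‖p - q‖ := by
    intro p q hp hq
    refine hball (y := (p, q)) ?_
    rw [Prod.dist_eq, dist_eq_norm, dist_eq_norm]
    exact max_lt hp hq
  have hlip : ∀ p q : E, ‖p - y‖ < δ → ‖q - y‖ < δ → ‖F p - F q‖ ≤ K * ‖p - q‖ := by
    intro p q hp hq
    have h1 := hstr p q hp hq
    have h2 := A.le_opNorm (p - q)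
    have h3 : ‖F p - F q‖ ≤ ‖F p - F q - A (p - q)‖ + ‖A (p - q)‖ := norm_le_norm_sub_add _ _
    have h4 : c * ‖p - q‖ ≤ 1 * ‖p - q‖ := by gcongr
    rw [hK]; linarith
  set C : ℝ := ‖F y‖ + K * δ + 1 with hC
  have hC0 : 0 < C := by positivity
  have hbd : ∀ p : E, ‖p - y‖ < δ → ‖F p‖ < C := by
    intro p hp
    have h1 := hlip p y hp (by simpa using hδ)
    have h3 : ‖F p‖ ≤ ‖F p - F y‖ + ‖F y‖ := norm_le_norm_sub_add _ _
    have h4 : K * ‖p - y‖ ≤ K * δ := by gcongr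
    rw [hC]; linarith
  set ε : ℝ := min 1 (min (δ / (4 * C)) (η / (2 * (‖A‖ * K * L + 1)))) with hε
  have hε0 : 0 < ε := by positivity
  have hε1 : ε ≤ 1 := min_le_left _ _
  have hε2 : C * ε ≤ δ / 4 := by
    have : ε ≤ δ / (4 * C) := (min_le_right _ _).trans (min_le_left _ _)
    calc C * ε ≤ C * (δ / (4 * C)) := by gcongr
      _ = δ / 4 := by field_simp
  have hε3 : ‖A‖ * K * L * ε ≤ η / 2 := by
    have : ε ≤ η / (2 * (‖A‖ * K * L + 1)) := (min_le_right _ _).trans (min_le_right _ _)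
    calc ‖A‖ * K * L * ε ≤ (‖A‖ * K * L + 1) * (η / (2 * (‖A‖ * K * L + 1))) := by
          gcongr; linarith
      _ = η / 2 := by
        have : ‖A‖ * K * L + 1 ≠ 0 := by positivity
        field_simp
  have hcont : ∀ p, Continuous (fun s => f s p) := fun p =>
    continuous_iff_continuousAt.2 fun t => (hflow t p).continuousAt
  have hstay : ∀ p : E, ‖p - y‖ ≤ δ / 4 → ∀ s ∈ Icc (0:ℝ) ε, ‖f s p - y‖ < δ := by
    intro p hp s hs
    have h := image_norm_le_of_norm_deriv_right_lt_deriv_boundary (f := fun s => f s p - y)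
      (f' := fun s => F (f s p)) (a := 0) (b := ε) (B := fun s => δ / 4 + C * s)
      (B' := fun _ => C)
      ((hcont p).sub continuous_const).continuousOn
      (fun t _ => ((hflow t p).sub_const y).hasDerivWithinAt)
      (by simpa [hf0] using hp)
      (fun t => by simpa using ((hasDerivAt_id t).const_mul C).const_add (δ / 4))
      (fun t ht h => by
        apply hbd
        rw [h]
        have : C * t ≤ C * ε := by gcongr; exact ht.2.le
        linarith) hs
    have : C * s ≤ C * ε := by gcongr; exact hs.2
    linarith
  have hgron : ∀ p : E, ‖p - y‖ ≤ δ / 4 → ∀ s ∈ Icc (0:ℝ) ε,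
      ‖f s p - f s y‖ ≤ L * ‖p - y‖ := by
    intro p hp s hs
    have h := norm_le_gronwallBound_of_norm_deriv_right_le (f := fun s => f s p - f s y)
      (f' := fun s => F (f s p) - F (f s y)) (a := 0) (b := ε) (K := K) (ε := 0)
      (δ := ‖p - y‖)
      ((hcont p).sub (hcont y)).continuousOn
      (fun t _ => ((hflow t p).sub (hflow t y)).hasDerivWithinAt)
      (by simp [hf0])
      (fun t ht => by
        rw [add_zero]
        exact hlip _ _ (hstay p hp t ⟨ht.1, ht.2.le⟩)
          (hstay y (by simp; positivity) t ⟨ht.1, ht.2.le⟩)) s hs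
    rw [gronwallBound_ε0, sub_zero, mul_comm] at h
    refine h.trans ?_
    gcongr
    rw [hL]
    apply Real.exp_le_exp.2
    have : K * s ≤ K * 1 := by gcongr; exact hs.2.trans hε1
    linarith
  have hdisp : ∀ p : E, ‖p - y‖ ≤ δ / 4 → ∀ s ∈ Icc (0:ℝ) ε,
      ‖(f s p - f s y) - (p - y)‖ ≤ K * L * ‖p - y‖ * s := by
    intro p hp s hs
    have h := norm_image_sub_le_of_norm_deriv_le_segment' (f := fun s => f s p - f s y)
      (f' := fun s => F (f s p) - F (f s y)) (a := 0) (b := ε) (C := K * L * ‖p - y‖)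
      (fun t _ => ((hflow t p).sub (hflow t y)).hasDerivWithinAt)
      (fun t ht => by
        have ht' : t ∈ Icc (0:ℝ) ε := ⟨ht.1, ht.2.le⟩
        refine (hlip _ _ (hstay p hp t ht') (hstay y (by simp; positivity) t ht')).trans ?_
        rw [mul_assoc]
        gcongr
        exact hgron p hp t ht') s hs
    simpa [hf0] using h
  refine ⟨ε, hε0, fun τ hτ => ?_⟩
  have hd : HasFDerivAt (fun p => f τ p - p - τ • A p)
      (fderiv ℝ (f τ) y - ContinuousLinearMap.id ℝ E - τ • A) y :=
    ((hfd τ).hasFDerivAt.sub (hasFDerivAt_id y)).sub (A.hasFDerivAt.const_smul τ)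
  refine hd.le_of_lip' (mul_nonneg hη.le hτ.1) ?_
  filter_upwards [Metric.closedBall_mem_nhds y (show 0 < δ / 4 by positivity)] with p hp
  rw [Metric.mem_closedBall, dist_eq_norm] at hp
  have h := norm_image_sub_le_of_norm_deriv_le_segment'
    (f := fun s => (f s p - f s y) - s • A (p - y))
    (f' := fun s => (F (f s p) - F (f s y)) - A (p - y)) (a := 0) (b := ε) (C := η * ‖p - y‖)
    (fun t _ => by
      have h1 := ((hasDerivAt_id t).smul_const (A (p - y)))
      rw [one_smul] at h1
      exact (((hflow t p).sub (hflow t y)).sub h1).hasDerivWithinAt)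
    (fun t ht => by
      have ht' : t ∈ Icc (0:ℝ) ε := ⟨ht.1, ht.2.le⟩
      have h1 := hstr _ _ (hstay p hp t ht') (hstay y (by simp; positivity) t ht')
      have h2 := hgron p hp t ht'
      have h3 := hdisp p hp t ht'
      have e : F (f t p) - F (f t y) - A (p - y)
          = (F (f t p) - F (f t y) - A (f t p - f t y)) + A ((f t p - f t y) - (p - y)) := by
        rw [map_sub A (f t p - f t y)]; abel
      rw [e]
      calc _ ≤ ‖F (f t p) - F (f t y) - A (f t p - f t y)‖
            + ‖A ((f t p - f t y) - (p - y))‖ := norm_add_le _ _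
        _ ≤ c * (L * ‖p - y‖) + ‖A‖ * (K * L * ‖p - y‖ * ε) := by
            refine add_le_add (h1.trans (by gcongr)) ((A.le_opNorm _).trans ?_)
            gcongr
            refine h3.trans ?_
            gcongr
            exact ht.2.le
        _ = (c * L + ‖A‖ * K * L * ε) * ‖p - y‖ := by ring
        _ ≤ η * ‖p - y‖ := by gcongr; linarith) τ hτ
  have e : f τ p - p - τ • A p - (f τ y - y - τ • A y)
      = (f τ p - f τ y - τ • A (p - y)) - (f 0 p - f 0 y - (0:ℝ) • A (p - y)) := by
    simp only [hf0, map_sub, smul_sub, zero_smul]; abel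
  rw [e]
  refine h.trans (le_of_eq ?_)
  ring

/-- The variational equation at time zero. -/
lemma flow_fderiv_zero {E : Type*} [NormedAddCommGroup E] [NormedSpace ℝ E]
    (F : E → E) (hF : ContDiff ℝ 2 F) (f : ℝ → E → E)
    (hf0 : ∀ x : E, f 0 x = x)
    (hflow : ∀ t : ℝ, ∀ x : E, HasDerivAt (fun τ : ℝ => f τ x) (F (f t x)) t)
    (hfC2 : ∀ t : ℝ, ContDiff ℝ 2 (f t)) (y : E) :
    HasDerivAt (fun τ => fderiv ℝ (f τ) y) (fderiv ℝ F y) 0 := by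
  have hS : HasStrictFDerivAt F (fderiv ℝ F y) y :=
    hF.contDiffAt.hasStrictFDerivAt (by norm_num)
  have hd : ∀ t, DifferentiableAt ℝ (f t) y := fun t =>
    (hfC2 t).contDiffAt.differentiableAt (by norm_num)
  have hz : fderiv ℝ (f 0) y = ContinuousLinearMap.id ℝ E := by
    have : f 0 = fun x => x := funext hf0
    rw [this]; exact fderiv_fun_id
  rw [hasDerivAt_iff_isLittleO, Asymptotics.isLittleO_iff]
  intro η hη
  obtain ⟨ε₁, h₁, H₁⟩ := flow_fderiv_forward F f y _ hS hf0 hflow hd η hη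
  obtain ⟨ε₂, h₂, H₂⟩ := flow_fderiv_forward (fun x => -F x) (fun t => f (-t)) y _ hS.neg
    (by simpa using hf0)
    (fun t x => by
      have := (hflow (-t) x).scomp t (hasDerivAt_neg t)
      simpa [Function.comp_def] using this)
    (fun t => hd (-t)) η hη
  filter_upwards [Ioo_mem_nhds (neg_lt_zero.2 h₂) h₁] with τ hτ
  rw [hz, sub_zero, Real.norm_eq_abs]
  rcases le_total 0 τ with h | h
  · rw [abs_of_nonneg h]
    exact H₁ τ ⟨h, hτ.2.le⟩
  · rw [abs_of_nonpos h]
    have := H₂ (-τ) ⟨by linarith, by linarith [hτ.1]⟩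
    simpa using this


/-- Duhamel / variation of constants.
Fix `x ∈ E`, let `b : ℝ → E` be continuous, and define
`w t := ∫_0^t D(f (t−s))(f s x) (b s) ds`.  Then `w 0 = 0` and, for all `t ≥ 0`,
`w` is differentiable with `w'(t) = DF(f t x)(w t) + b t`. -/
theorem equivariant_divergence_stmt2
    {E : Type*} [NormedAddCommGroup E] [NormedSpace ℝ E] [FiniteDimensional ℝ E]
    (F : E → E) (hF : ContDiff ℝ 2 F)
    (f : ℝ → E → E)
    (hf0 : ∀ x : E, f 0 x = x)
    (hfadd : ∀ s t : ℝ, ∀ x : E, f (s + t) x = f s (f t x))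
    (hflow : ∀ t : ℝ, ∀ x : E, HasDerivAt (fun τ : ℝ => f τ x) (F (f t x)) t)
    (hfC2 : ∀ t : ℝ, ContDiff ℝ 2 (f t))
    (x : E) (b : ℝ → E) (hb : Continuous b)
    (w : ℝ → E)
    (hw : ∀ t : ℝ, w t = ∫ s in (0:ℝ)..t, fderiv ℝ (f (t - s)) (f s x) (b s)) :
    w 0 = 0 ∧
    ∀ t : ℝ, 0 ≤ t →
      HasDerivAt w (fderiv ℝ F (f t x) (w t) + b t) t := by
  refine ⟨by simp [hw], fun t _ => ?_⟩
  have hd : ∀ t y, DifferentiableAt ℝ (f t) y := fun t y =>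
    (hfC2 t).contDiffAt.differentiableAt (by norm_num)
  have hcoc : ∀ s t y, fderiv ℝ (f (s + t)) y = fderiv ℝ (f s) (f t y) * fderiv ℝ (f t) y := by
    intro s t y
    have : f (s + t) = f s ∘ f t := funext (hfadd s t)
    rw [this, fderiv_comp _ (hd _ _) (hd _ _)]
    rfl
  have hz : ∀ y, fderiv ℝ (f 0) y = 1 := by
    intro y
    have : f 0 = fun x => x := funext hf0
    rw [this]; exact fderiv_fun_id
  set M : ℝ → E →L[ℝ] E := fun t => fderiv ℝ (f t) x with hM
  have hMd : ∀ t, HasDerivAt M (fderiv ℝ F (f t x) * M t) t := by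
    intro t
    have h0 := flow_fderiv_zero F hF f hf0 hflow hfC2 (f t x)
    rw [← sub_self t] at h0
    have h1 := (h0.comp_sub_const t t).mul_const (M t)
    refine h1.congr_of_eventuallyEq (Eventually.of_forall fun s => ?_)
    simp only [hM]
    rw [← hcoc, sub_add_cancel]
  have hMunit : ∀ s, IsUnit (M s) := by
    intro s
    refine ⟨⟨M s, fderiv ℝ (f (-s)) (f s x), ?_, ?_⟩, rfl⟩
    · have h := hcoc s (-s) (f s x)
      rw [← hfadd, neg_add_cancel, hf0, add_neg_cancel, hz] at h
      exact h.symm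
    · simp only [hM]
      rw [← hcoc, neg_add_cancel, hz]
  have hMc : Continuous M := continuous_iff_continuousAt.2 fun t => (hMd t).continuousAt
  have hNc : Continuous (fun s => Ring.inverse (M s)) := by
    rw [continuous_iff_continuousAt]
    intro s
    obtain ⟨u, hu⟩ := hMunit s
    have h := NormedRing.inverse_continuousAt u
    rw [hu] at h
    exact ContinuousAt.comp (g := Ring.inverse) (f := M) h hMc.continuousAt
  have hNb : Continuous (fun s => Ring.inverse (M s) (b s)) := hNc.clm_apply hb
  have hfac : ∀ t s, fderiv ℝ (f (t - s)) (f s x) = M t * Ring.inverse (M s) := by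
    intro t s
    rw [Ring.eq_mul_inverse_iff_mul_eq _ _ _ (hMunit s)]
    simp only [hM]
    rw [← hcoc, sub_add_cancel]
  have hw' : w = fun t => M t (∫ s in (0:ℝ)..t, Ring.inverse (M s) (b s)) := by
    funext t
    rw [hw t, ← ContinuousLinearMap.intervalIntegral_comp_comm (M t)
      (hNb.intervalIntegrable 0 t)]
    simp only [hfac]
    rfl
  have hI := (hNb.integral_hasStrictDerivAt 0 t).hasDerivAt
  have h := (hMd t).clm_apply hI
  rw [hw']
  convert h using 1
  have h2 : M t (Ring.inverse (M t) (b t)) = b t := by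
    have := Ring.mul_inverse_cancel (M t) (hMunit t)
    exact congrArg (fun T : E →L[ℝ] E => T (b t)) this
  rw [h2]
  rfl
end
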